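/- For every n ≥ 1, the type D Chan-Robbins-Yuen polytope CRYD_{n+1} = F_{K^D_{n+1}}(2,0,…,0) has exactly 3^n - 2^n vertices. -/

import Mathlib

/-- Edges of the complete signed graph `K^D_{n+1}`: a pair `i < j` together with a
sign (`true` = positive edge, `false` = negative edge). -/
abbrev EdgeD (n : ℕ) := {p : Fin (n + 1) × Fin (n + 1) // p.1 < p.2} × Bool

/-- The type `C`/`D` root associated to an edge: `e_i - e_j` for a negative edge and
`e_i + e_j` for a positive edge. -/
def rootD (n : ℕ) (e : EdgeD n) : Fin (n + 1) → ℝ := fun k =>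
  (if k = e.1.1.1 then 1 else 0) + (if k = e.1.1.2 then (if e.2 then 1 else -1) else 0)

/-- The type `D` Chan-Robbins-Yuen polytope `CRYD_{n+1} = F_{K^D_{n+1}}(2,0,…,0)`. -/
def CRYD (n : ℕ) : Set (EdgeD n → ℝ) :=
  {b | (∀ e, 0 ≤ b e) ∧
    (∑ e, b e • rootD n e) = fun k => if k = 0 then (2 : ℝ) else 0}

/-!
By complementary slackness a point of a polytope `{x | 0 ≤ x, A x = c}` is a vertex if and only if
its support contains the support of no other point. In a flow `b ∈ CRYD n` every node emitting flow
is fed along negative edges from `0`, and the total netflow `2` can only be absorbed by positive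
edges. Hence the support of `b` contains the support of a *fork*: two paths of negative edges from
`0` that share an initial part, never meet again after parting, and whose endpoints are joined by a
positive edge. The negative edges of a fork form a forest, so the fork is the only point of the
polytope on its support. The vertices are therefore the forks.

To count the forks, record at each of the nodes `1, …, n` whether it lies on neither path (`0`), on
the trunk (`1`) or only on the branch, which is the path through the first node where the two differ
(`2`). The words obtained are those using the letter `2`.
-/

/-- The edge `(i, j, -)`. -/
abbrev negEdge {n : ℕ} {i j : Fin (n + 1)} (h : i < j) : EdgeD n := (⟨(i, j), h⟩, false)

/-- The edge `(i, j, +)`. -/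
abbrev posEdge {n : ℕ} {i j : Fin (n + 1)} (h : i < j) : EdgeD n := (⟨(i, j), h⟩, true)

section NonnegFiber

variable {ι 𝕜 E : Type*} [Field 𝕜] [LinearOrder 𝕜] [IsStrictOrderedRing 𝕜]

theorem exists_one_lt_le_smul [Finite ι] {x y : ι → 𝕜} (hx : 0 ≤ x)
    (hxy : Function.support y ⊆ Function.support x) : ∃ t : 𝕜, 1 < t ∧ y ≤ t • x := by
  obtain ⟨M, hM⟩ := (Set.finite_range fun i ↦ y i / x i).bddAbove
  refine ⟨max M 2, one_lt_two.trans_le (le_max_right _ _), fun i ↦ ?_⟩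
  obtain hxi | hxi := (hx i).eq_or_lt
  · have hyi : y i = 0 := by
      by_contra hyi
      exact hxy hyi hxi.symm
    simp [hyi, ← hxi]
  · have hle : y i / x i ≤ max M 2 := (hM ⟨i, rfl⟩).trans (le_max_left _ _)
    simpa using (div_le_iff₀ hxi).1 hle

theorem support_subset_of_mem_openSegment {x y z : ι → 𝕜} (hy : 0 ≤ y) (hz : 0 ≤ z)
    (hx : x ∈ openSegment 𝕜 y z) : Function.support y ⊆ Function.support x := by
  obtain ⟨s, t, hs, ht, -, rfl⟩ := hx
  intro i hi
  have hyi : 0 < y i := (hy i).lt_of_ne' hi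
  exact (add_pos_of_pos_of_nonneg (mul_pos hs hyi) (mul_nonneg ht.le (hz i))).ne'

variable [AddCommGroup E] [Module 𝕜 E] {A : (ι → 𝕜) →ₗ[𝕜] E} {c : E}

theorem eq_of_mem_extremePoints_of_support_subset [Finite ι] {x y : ι → 𝕜}
    (hx : x ∈ Set.extremePoints 𝕜 {z | 0 ≤ z ∧ A z = c}) (hy : 0 ≤ y) (hAy : A y = c)
    (hyx : Function.support y ⊆ Function.support x) : y = x := by
  obtain ⟨⟨hx₀, hAx⟩, hext⟩ := mem_extremePoints_iff_left.1 hx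
  obtain ⟨t, ht, hyt⟩ := exists_one_lt_le_smul hx₀ hyx
  have ht₀ : 0 < t := one_pos.trans ht
  have ht₁ : 0 < t - 1 := sub_pos.2 ht
  let z : ι → 𝕜 := (t - 1)⁻¹ • (t • x - y)
  have hz : 0 ≤ z := smul_nonneg (inv_nonneg.2 ht₁.le) (sub_nonneg.2 hyt)
  have hAz : A z = c := by
    have hsub : t • c - c = (t - 1) • c := by rw [sub_smul, one_smul]
    rw [map_smul, map_sub, map_smul, hAx, hAy, hsub, inv_smul_smul₀ ht₁.ne']
  refine hext y ⟨hy, hAy⟩ z ⟨hz, hAz⟩ ⟨t⁻¹, 1 - t⁻¹, inv_pos.2 ht₀, ?_, by ring, ?_⟩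
  · exact sub_pos.2 (inv_lt_one_of_one_lt₀ ht)
  · ext i
    simp only [z, Pi.add_apply, Pi.sub_apply, Pi.smul_apply, smul_eq_mul]
    field_simp
    ring

theorem mem_extremePoints_nonneg_fiber_iff [Finite ι] {x : ι → 𝕜} :
    x ∈ Set.extremePoints 𝕜 {z | 0 ≤ z ∧ A z = c} ↔
      (0 ≤ x ∧ A x = c) ∧ ∀ y, 0 ≤ y → A y = c →
        Function.support y ⊆ Function.support x → y = x := by
  refine ⟨fun hx ↦ ⟨hx.1, fun y ↦ eq_of_mem_extremePoints_of_support_subset hx⟩, fun h ↦ ?_⟩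
  refine mem_extremePoints_iff_left.2 ⟨h.1, fun y hy z hz hx ↦ h.2 y hy.1 hy.2 ?_⟩
  exact support_subset_of_mem_openSegment hy.1 hz.1 hx

end NonnegFiber

section IsPred

variable {α : Type*} {P : Finset α}

/-- `i` is the predecessor of `j` in the set `P`, that is, `(i, j)` is a step of the path that
visits the elements of `P` in increasing order. -/
def IsPred [Preorder α] (P : Finset α) (i j : α) : Prop :=
  j ∈ P ∧ IsGreatest {l | l ∈ P ∧ l < j} i

theorem exists_isPred [LinearOrder α] {i j : α} (hi : i ∈ P) (hj : j ∈ P) (hij : i < j) :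
    ∃ l, IsPred P l j := by
  have hne : (P.filter (· < j)).Nonempty := ⟨i, Finset.mem_filter.2 ⟨hi, hij⟩⟩
  exact ⟨_, hj, by simpa using Finset.isGreatest_max' _ hne⟩

theorem isPred_insert_iff [LinearOrder α] {x y i j : α} (hx : P.max = x) (hxy : x < y) :
    IsPred (insert y P) i j ↔ IsPred P i j ∨ i = x ∧ j = y := by
  have hlt : ∀ l ∈ P, l < y := fun l hl ↦ (Finset.le_max_of_eq hl hx).trans_lt hxy
  have hyP : y ∉ P := fun hy ↦ (hlt y hy).false
  have hxP : IsGreatest {l | l ∈ P ∧ l < y} x :=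
    ⟨⟨Finset.mem_of_max hx, hxy⟩, fun l hl ↦ Finset.le_max_of_eq hl.1 hx⟩
  have hbelow : ∀ j ≤ y, {l | l ∈ insert y P ∧ l < j} = {l | l ∈ P ∧ l < j} := by
    intro j hj
    ext l
    simp only [Finset.mem_insert, Set.mem_ofPred_eq]
    exact ⟨fun h ↦ ⟨h.1.resolve_left (h.2.trans_le hj).ne, h.2⟩, fun h ↦ ⟨.inr h.1, h.2⟩⟩
  constructor
  · rintro ⟨hj, hi⟩
    obtain rfl | hjP := Finset.mem_insert.1 hj
    · rw [hbelow j le_rfl] at hi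
      exact .inr ⟨hi.unique hxP, rfl⟩
    · rw [hbelow j (hlt j hjP).le] at hi
      exact .inl ⟨hjP, hi⟩
  · rintro (⟨hjP, hi⟩ | ⟨rfl, rfl⟩)
    · exact ⟨Finset.mem_insert_of_mem hjP, by rwa [hbelow j (hlt j hjP).le]⟩
    · exact ⟨Finset.mem_insert_self _ _, by rwa [hbelow j le_rfl]⟩

theorem max_insert_of_max_le [LinearOrder α] {x y : α} (hx : P.max = x) (hxy : x ≤ y) :
    (insert y P).max = y := by
  rw [Finset.max_insert, hx, max_eq_left (WithBot.coe_le_coe.2 hxy)]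

end IsPred

namespace CRYD

variable {n : ℕ} {b : EdgeD n → ℝ} {P Q P' Q' : Finset (Fin (n + 1))} {x y : Fin (n + 1)}

/-- The netflow of a flow on `K^D_{n+1}`: the weighted sum of the roots of the edges. -/
noncomputable def netflow (n : ℕ) : (EdgeD n → ℝ) →ₗ[ℝ] (Fin (n + 1) → ℝ) :=
  Fintype.linearCombination ℝ (rootD n)

theorem netflow_apply (b : EdgeD n → ℝ) (k : Fin (n + 1)) :
    netflow n b k = ∑ e, b e * rootD n e k := by
  simp [netflow, Fintype.linearCombination_apply]

theorem netflow_single (e : EdgeD n) : netflow n (Pi.single e 1) = rootD n e := by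
  simp [netflow, Fintype.linearCombination_apply_single]

theorem eq_setOf_netflow (n : ℕ) : CRYD n = {b | 0 ≤ b ∧ netflow n b = Pi.single 0 2} := by
  have hsingle : (fun k : Fin (n + 1) ↦ if k = 0 then (2 : ℝ) else 0) = Pi.single 0 2 := by
    ext k
    exact (Pi.single_apply 0 2 k).symm
  ext b
  simp only [CRYD, hsingle, netflow, Fintype.linearCombination_apply, Set.mem_ofPred_eq, Pi.le_def,
    Pi.zero_apply]

theorem rootD_negEdge (h : x < y) : rootD n (negEdge h) = Pi.single x 1 - Pi.single y 1 := by
  ext k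
  simp only [rootD, Pi.sub_apply, Pi.single_apply]
  split_ifs <;> simp_all

theorem rootD_posEdge (h : x < y) : rootD n (posEdge h) = Pi.single x 1 + Pi.single y 1 := by
  ext k
  simp [rootD, Pi.single_apply]

theorem rootD_negEdge_head (h : x < y) : rootD n (negEdge h) y = -1 := by
  simp [rootD_negEdge, h.ne']

theorem rootD_tail_pos (e : EdgeD n) : 0 < rootD n e e.1.1.1 := by
  simp [rootD, e.1.2.ne]

theorem rootD_posEdge_head_pos (h : x < y) : 0 < rootD n (posEdge h) y := by
  simp [rootD_posEdge, h.ne']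

theorem eq_negEdge_of_rootD_neg {e : EdgeD n} (h : rootD n e y < 0) :
    ∃ x, ∃ hxy : x < y, e = negEdge hxy := by
  obtain ⟨⟨⟨i, j⟩, hij⟩, _ | _⟩ := e
  · obtain rfl : y = j := by
      simp only [rootD] at h
      split_ifs at h <;> first | assumption | norm_num at h
    exact ⟨i, hij, rfl⟩
  · simp only [rootD] at h
    split_ifs at h <;> norm_num at h

theorem eq_or_eq_of_rootD_ne_zero {e : EdgeD n} {k : Fin (n + 1)} (h : rootD n e k ≠ 0) :
    k = e.1.1.1 ∨ k = e.1.1.2 := by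
  by_contra! hk
  exact h (by simp [rootD, hk.1, hk.2])

theorem sum_rootD (e : EdgeD n) : ∑ k, rootD n e k = if e.2 then 2 else 0 := by
  obtain ⟨⟨⟨i, j⟩, hij⟩, _ | _⟩ := e
  · simp [rootD, Finset.sum_add_distrib]
  · simp [rootD, Finset.sum_add_distrib, one_add_one_eq_two]

theorem exists_posEdge_ne_zero (hb : netflow n b = Pi.single 0 2) :
    ∃ x y, ∃ h : x < y, b (posEdge h) ≠ 0 := by
  by_contra! hpos
  have hterm : ∀ e, b e * ∑ k, rootD n e k = 0 := by
    rintro ⟨⟨⟨i, j⟩, hij⟩, _ | _⟩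
    · simp [sum_rootD]
    · simp [hpos i j hij]
  have hsum : ∑ k, netflow n b k = 0 := by
    simp_rw [netflow_apply]
    rw [Finset.sum_comm]
    exact Finset.sum_eq_zero fun e _ ↦ by rw [← Finset.mul_sum, hterm]
  simp [hb] at hsum

/-- The unit flow along the path through the nodes of `P` in increasing order, using negative
edges. -/
noncomputable def pathFlow (P : Finset (Fin (n + 1))) : EdgeD n → ℝ :=
  Set.indicator {e | e.2 = false ∧ IsPred P e.1.1.1 e.1.1.2} 1

theorem pathFlow_nonneg (P : Finset (Fin (n + 1))) : 0 ≤ pathFlow P :=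
  Set.indicator_nonneg fun _ _ ↦ zero_le_one

theorem pathFlow_posEdge (P : Finset (Fin (n + 1))) (h : x < y) : pathFlow P (posEdge h) = 0 := by
  simp [pathFlow]

theorem pathFlow_negEdge_ne_zero_iff (h : x < y) :
    pathFlow P (negEdge h) ≠ 0 ↔ IsPred P x y := by
  simp [pathFlow]

theorem pathFlow_singleton (x : Fin (n + 1)) : pathFlow {x} = 0 := by
  refine Set.indicator_eq_zero'.2 (Set.disjoint_right.2 ?_)
  rintro e ⟨-, hhead, ⟨htail, -⟩, -⟩ -
  exact e.1.2.ne ((Finset.mem_singleton.1 htail).trans (Finset.mem_singleton.1 hhead).symm)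

theorem pathFlow_insert (hx : P.max = x) (hxy : x < y) :
    pathFlow (insert y P) = pathFlow P + Pi.single (negEdge hxy) 1 := by
  classical
  have hnot : ¬IsPred P x y := fun h ↦ (Finset.le_max_of_eq h.1 hx).not_gt hxy
  ext ⟨⟨⟨i, j⟩, hij⟩, _ | _⟩
  · by_cases h : i = x ∧ j = y
    · obtain ⟨rfl, rfl⟩ := h
      simp [pathFlow, isPred_insert_iff hx hxy, hnot]
    · simp [pathFlow, Set.indicator_apply, isPred_insert_iff hx hxy, h]
  · simp [pathFlow]

theorem netflow_pathFlow (hP : 0 ∈ P) (hx : P.max = x) :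
    netflow n (pathFlow P) = Pi.single 0 1 - Pi.single x 1 := by
  induction P using Finset.induction_on_max generalizing x with
  | empty => simp at hP
  | insert y P hlt ih =>
    obtain rfl | hne := P.eq_empty_or_nonempty
    · obtain rfl : 0 = y := by simpa using hP
      obtain rfl : x = 0 := by simpa using hx
      simp [pathFlow_singleton]
    · obtain ⟨w, hw⟩ := Finset.max_of_nonempty hne
      have hwy : w < y := hlt w (Finset.mem_of_max hw)
      have hP' : 0 ∈ P := (Finset.mem_insert.1 hP).resolve_left fun h ↦ Fin.not_lt_zero w (h ▸ hwy)
      obtain rfl : y = x := WithBot.coe_injective ((max_insert_of_max_le hw hwy.le).symm.trans hx)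
      rw [pathFlow_insert hw hwy, map_add, ih hP' hw, netflow_single, rootD_negEdge,
        sub_add_sub_cancel]

/-- The unit flow on the positive edge joining the last nodes of `P` and `Q`. -/
noncomputable def closingFlow (P Q : Finset (Fin (n + 1))) : EdgeD n → ℝ :=
  Set.indicator {e | e.2 = true ∧ s(P.max, Q.max) = s(↑e.1.1.1, ↑e.1.1.2)} 1

theorem closingFlow_comm (P Q : Finset (Fin (n + 1))) : closingFlow P Q = closingFlow Q P := by
  rw [closingFlow, closingFlow, Sym2.eq_swap]

theorem closingFlow_eq_single (hx : P.max = x) (hy : Q.max = y) (hxy : x < y) :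
    closingFlow P Q = Pi.single (posEdge hxy) 1 := by
  classical
  ext ⟨⟨⟨i, j⟩, hij⟩, _ | _⟩
  · simp [closingFlow]
  · have hiff : s(P.max, Q.max) = s((i : WithBot (Fin (n + 1))), ↑j) ↔ i = x ∧ j = y := by
      rw [hx, hy, Sym2.eq_iff]
      norm_cast
      constructor
      · rintro (⟨rfl, rfl⟩ | ⟨rfl, rfl⟩)
        · exact ⟨rfl, rfl⟩
        · exact absurd hij hxy.not_gt
      · rintro ⟨rfl, rfl⟩
        exact .inl ⟨rfl, rfl⟩
    simp only [closingFlow, Set.indicator_apply, Set.mem_ofPred_eq, hiff, true_and]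
    simp [Pi.single_apply]

theorem exists_closingFlow_eq_single (hx : P.max = x) (hy : Q.max = y) (hxy : x ≠ y) :
    ∃ i j, ∃ h : i < j, closingFlow P Q = Pi.single (posEdge h) 1 ∧
      rootD n (posEdge h) = Pi.single x 1 + Pi.single y 1 := by
  obtain hlt | hlt := hxy.lt_or_gt
  · exact ⟨x, y, hlt, closingFlow_eq_single hx hy hlt, rootD_posEdge hlt⟩
  · refine ⟨y, x, hlt, ?_, ?_⟩
    · rw [closingFlow_comm, closingFlow_eq_single hy hx hlt]
    · rw [rootD_posEdge, add_comm (Pi.single y 1)]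

/-- Two paths from `0` that agree before some node `p` and have no common node from `p` on, where
`p` lies on the first path. Requiring this of the first path selects one of the two orders of the
pair. -/
structure IsFork (P Q : Finset (Fin (n + 1))) : Prop where
  zero_mem_left : 0 ∈ P
  zero_mem_right : 0 ∈ Q
  exists_parting : ∃ p ∈ P, (∀ k < p, k ∈ P ↔ k ∈ Q) ∧ ∀ k, p ≤ k → k ∈ P → k ∉ Q

theorem IsFork.max_ne (h : IsFork P Q) (hx : P.max = x) (hy : Q.max = y) : x ≠ y := by
  rintro rfl
  obtain ⟨p, hp, -, hdisj⟩ := h.exists_parting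
  exact hdisj x (Finset.le_max_of_eq hp hx) (Finset.mem_of_max hx) (Finset.mem_of_max hy)

theorem IsFork.isPred_unique (h : IsFork P Q) {i j k : Fin (n + 1)} (hi : IsPred P i k)
    (hj : IsPred Q j k) : i = j := by
  obtain ⟨p, -, hagree, hdisj⟩ := h.exists_parting
  have hkp : k < p := lt_of_not_ge fun hpk ↦ hdisj k hpk hi.1 hj.1
  have hbelow : {l | l ∈ P ∧ l < k} = {l | l ∈ Q ∧ l < k} :=
    Set.ext fun l ↦ and_congr_left fun hl ↦ hagree l (hl.trans hkp)
  exact hi.2.unique (hbelow ▸ hj.2)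

theorem IsFork.insert_left (h : IsFork P Q) (hP : ∀ k ∈ P, k < y) (hQ : ∀ k ∈ Q, k < y) :
    IsFork (insert y P) Q := by
  obtain ⟨p, hp, hagree, hdisj⟩ := h.exists_parting
  refine ⟨Finset.mem_insert_of_mem h.zero_mem_left, h.zero_mem_right, p,
    Finset.mem_insert_of_mem hp, fun k hk ↦ ?_, fun k hpk hk hkQ ↦ ?_⟩
  · rw [Finset.mem_insert, or_iff_right (hk.trans (hP p hp)).ne, hagree k hk]
  · exact hdisj k hpk ((Finset.mem_insert.1 hk).resolve_left (hQ k hkQ).ne) hkQ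

theorem IsFork.insert_right (h : IsFork P Q) (hP : ∀ k ∈ P, k < y) : IsFork P (insert y Q) := by
  obtain ⟨p, hp, hagree, hdisj⟩ := h.exists_parting
  refine ⟨h.zero_mem_left, Finset.mem_insert_of_mem h.zero_mem_right, p, hp, fun k hk ↦ ?_,
    fun k hpk hk hkQ ↦ ?_⟩
  · rw [Finset.mem_insert, or_iff_right (hk.trans (hP p hp)).ne, hagree k hk]
  · exact hdisj k hpk hk ((Finset.mem_insert.1 hkQ).resolve_left (hP k hk).ne)

theorem isFork_insert_self (hP : 0 ∈ P) (hlt : ∀ k ∈ P, k < y) : IsFork (insert y P) P :=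
  ⟨Finset.mem_insert_of_mem hP, hP, y, Finset.mem_insert_self y P,
    fun k hk ↦ by rw [Finset.mem_insert, or_iff_right hk.ne],
    fun k hyk _ hkP ↦ (hlt k hkP).not_ge hyk⟩

/-- The flow of a fork: a unit along each of the two paths, absorbed by the positive edge joining
their last nodes. -/
noncomputable def forkFlow (P Q : Finset (Fin (n + 1))) : EdgeD n → ℝ :=
  pathFlow P + pathFlow Q + closingFlow P Q

theorem forkFlow_comm (P Q : Finset (Fin (n + 1))) : forkFlow P Q = forkFlow Q P := by
  rw [forkFlow, forkFlow, closingFlow_comm, add_comm (pathFlow P)]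

theorem forkFlow_nonneg (P Q : Finset (Fin (n + 1))) : 0 ≤ forkFlow P Q :=
  add_nonneg (add_nonneg (pathFlow_nonneg P) (pathFlow_nonneg Q))
    (Set.indicator_nonneg fun _ _ ↦ zero_le_one)

theorem forkFlow_posEdge (P Q : Finset (Fin (n + 1))) (h : x < y) :
    forkFlow P Q (posEdge h) = closingFlow P Q (posEdge h) := by
  simp [forkFlow, pathFlow_posEdge]

theorem forkFlow_negEdge (P Q : Finset (Fin (n + 1))) (h : x < y) :
    forkFlow P Q (negEdge h) = pathFlow P (negEdge h) + pathFlow Q (negEdge h) := by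
  simp [forkFlow, closingFlow]

theorem forkFlow_negEdge_ne_zero_iff (h : x < y) :
    forkFlow P Q (negEdge h) ≠ 0 ↔ IsPred P x y ∨ IsPred Q x y := by
  rw [forkFlow_negEdge, Ne, add_eq_zero_iff_of_nonneg (pathFlow_nonneg P _) (pathFlow_nonneg Q _),
    not_and_or]
  exact or_congr (pathFlow_negEdge_ne_zero_iff h) (pathFlow_negEdge_ne_zero_iff h)

theorem IsFork.netflow_forkFlow (h : IsFork P Q) : netflow n (forkFlow P Q) = Pi.single 0 2 := by
  obtain ⟨x, hx⟩ := Finset.max_of_mem h.zero_mem_left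
  obtain ⟨y, hy⟩ := Finset.max_of_mem h.zero_mem_right
  obtain ⟨i, j, hij, hclosing, hroot⟩ := exists_closingFlow_eq_single hx hy (h.max_ne hx hy)
  rw [forkFlow, map_add, map_add, netflow_pathFlow h.zero_mem_left hx,
    netflow_pathFlow h.zero_mem_right hy, hclosing, netflow_single, hroot, ← one_add_one_eq_two,
    Pi.single_add]
  abel

theorem eq_zero_of_forest (hpos : ∀ ⦃i j⦄ (h : i < j), b (posEdge h) = 0)
    (hforest : ∀ ⦃i j k⦄ (hi : i < k) (hj : j < k),
      b (negEdge hi) ≠ 0 → b (negEdge hj) ≠ 0 → i = j)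
    (hnet : ∀ k ≠ 0, netflow n b k = 0) : b = 0 := by
  have hneg : ∀ k i, ∀ h : i < k, b (negEdge h) = 0 := by
    intro k
    induction k using WellFoundedGT.induction with
    | ind k ih =>
    intro i hik
    by_contra hb
    have hsum : netflow n b k = b (negEdge hik) * rootD n (negEdge hik) k := by
      rw [netflow_apply]
      refine Finset.sum_eq_single_of_mem _ (Finset.mem_univ _) ?_
      rintro ⟨⟨⟨j, l⟩, hjl⟩, _ | _⟩ - hne
      · by_contra hprod
        obtain ⟨hbe, hroot⟩ := mul_ne_zero_iff.1 hprod
        obtain rfl | rfl := eq_or_eq_of_rootD_ne_zero hroot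
        · exact hbe (ih l hjl k hjl)
        · obtain rfl := hforest hik hjl hb hbe
          exact hne rfl
      · simp [hpos hjl]
    rw [hnet k (Fin.ne_zero_of_lt hik), rootD_negEdge_head] at hsum
    exact hb (by linarith)
  ext ⟨⟨⟨i, j⟩, hij⟩, _ | _⟩
  · exact hneg j i hij
  · exact hpos hij

theorem IsFork.eq_forkFlow (h : IsFork P Q) (hb : netflow n b = Pi.single 0 2)
    (hsupp : Function.support b ⊆ Function.support (forkFlow P Q)) : b = forkFlow P Q := by
  obtain ⟨x, hx⟩ := Finset.max_of_mem h.zero_mem_left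
  obtain ⟨y, hy⟩ := Finset.max_of_mem h.zero_mem_right
  obtain ⟨i, j, hij, hclosing, -⟩ := exists_closingFlow_eq_single hx hy (h.max_ne hx hy)
  set c : ℝ := b (posEdge hij)
  set z : EdgeD n → ℝ := b - c • forkFlow P Q with hz
  have hznet : netflow n z = Pi.single 0 (2 - c * 2) := by
    rw [hz, map_sub, map_smul, hb, h.netflow_forkFlow, ← Pi.single_smul, ← Pi.single_sub,
      smul_eq_mul]
  have hzsupp : ∀ e, z e ≠ 0 → forkFlow P Q e ≠ 0 := by
    intro e hze hfe
    have hbe : b e = 0 := by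
      by_contra hbe
      exact hsupp hbe hfe
    exact hze (by simp [hz, hbe, hfe])
  have hzpos : ∀ ⦃k l⦄ (hkl : k < l), z (posEdge hkl) = 0 := by
    intro k l hkl
    by_cases he : posEdge hkl = posEdge hij
    · rw [he, hz, Pi.sub_apply, Pi.smul_apply, forkFlow_posEdge, hclosing, Pi.single_eq_same,
        smul_eq_mul, mul_one, sub_self]
    · by_contra hze
      apply hzsupp _ hze
      rw [forkFlow_posEdge, hclosing, Pi.single_eq_of_ne he]
  have hz₀ : z = 0 := by
    refine eq_zero_of_forest hzpos (fun k l m hk hl hzk hzl ↦ ?_) fun k hk ↦ ?_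
    · obtain hPk | hQk := (forkFlow_negEdge_ne_zero_iff hk).1 (hzsupp _ hzk) <;>
        obtain hPl | hQl := (forkFlow_negEdge_ne_zero_iff hl).1 (hzsupp _ hzl)
      · exact hPk.2.unique hPl.2
      · exact h.isPred_unique hPk hQl
      · exact (h.isPred_unique hPl hQk).symm
      · exact hQk.2.unique hQl.2
    · rw [hznet, Pi.single_eq_of_ne hk]
  have hc : c = 1 := by
    rw [hz₀, map_zero, eq_comm, Pi.single_eq_zero_iff] at hznet
    linarith
  rwa [hz, hc, one_smul, sub_eq_zero] at hz₀

/-- The node `k` sends flow along a negative edge or takes part in a positive edge carrying flow. -/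
def Emits (b : EdgeD n → ℝ) (k : Fin (n + 1)) : Prop :=
  ∃ e, b e ≠ 0 ∧ 0 < rootD n e k

theorem Emits.exists_negEdge_ne_zero (hb : 0 ≤ b) (hy : netflow n b y ≤ 0) (h : Emits b y) :
    ∃ x, ∃ hxy : x < y, b (negEdge hxy) ≠ 0 ∧ Emits b x := by
  obtain ⟨e, hbe, hroot⟩ := h
  have hneg : ∃ e', b e' * rootD n e' y < 0 := by
    by_contra! hnonneg
    refine hy.not_gt ?_
    rw [netflow_apply]
    exact Finset.sum_pos' (fun e' _ ↦ hnonneg e')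
      ⟨e, Finset.mem_univ e, mul_pos ((hb e).lt_of_ne' hbe) hroot⟩
  obtain ⟨e', he'⟩ := hneg
  obtain ⟨x, hxy, rfl⟩ := eq_negEdge_of_rootD_neg (neg_of_mul_neg_right he' (hb e'))
  have hbe' : b (negEdge hxy) ≠ 0 := left_ne_zero_of_mul he'.ne
  exact ⟨x, hxy, hbe', negEdge hxy, hbe', rootD_tail_pos _⟩

/-- The nodes of `P`, in increasing order, form a path from `0` to `x` along negative edges on which
`b` does not vanish. -/
structure IsPath (b : EdgeD n → ℝ) (P : Finset (Fin (n + 1))) (x : Fin (n + 1)) : Prop where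
  zero_mem : 0 ∈ P
  max_eq : P.max = x
  ne_zero : ∀ ⦃i j⦄ (h : i < j), IsPred P i j → b (negEdge h) ≠ 0

theorem isPath_zero (b : EdgeD n → ℝ) : IsPath b {0} 0 where
  zero_mem := Finset.mem_singleton_self 0
  max_eq := Finset.max_singleton
  ne_zero i j h hij := absurd h (by simp [Finset.mem_singleton.1 hij.1])

theorem IsPath.insert (h : IsPath b P x) (hxy : x < y) (hb : b (negEdge hxy) ≠ 0) :
    IsPath b (insert y P) y where
  zero_mem := Finset.mem_insert_of_mem h.zero_mem
  max_eq := max_insert_of_max_le h.max_eq hxy.le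
  ne_zero i j hij hpred := by
    obtain hP | ⟨rfl, rfl⟩ := (isPred_insert_iff h.max_eq hxy).1 hpred
    · exact h.ne_zero hij hP
    · exact hb

theorem IsPath.lt_of_mem (h : IsPath b P x) (hxy : x < y) : ∀ k ∈ P, k < y :=
  fun _ hk ↦ (Finset.le_max_of_eq hk h.max_eq).trans_lt hxy

theorem Emits.exists_isPath (hb : 0 ≤ b) (hnet : ∀ k ≠ 0, netflow n b k ≤ 0) (hx : Emits b x) :
    ∃ P, IsPath b P x := by
  induction x using WellFoundedLT.induction with
  | ind x ih =>
  obtain rfl | hx₀ := eq_or_ne x 0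
  · exact ⟨{0}, isPath_zero b⟩
  · obtain ⟨w, hwx, hbw, hw⟩ := hx.exists_negEdge_ne_zero hb (hnet x hx₀)
    obtain ⟨P, hP⟩ := ih w hwx hw
    exact ⟨insert x P, hP.insert hwx hbw⟩

/-- The paths are built backwards, always extending the one with the larger last node; they have a
common initial part because the construction continues as a single path once the two nodes
coincide. -/
theorem exists_isPath_isFork (hb : 0 ≤ b) (hnet : ∀ k ≠ 0, netflow n b k ≤ 0) (hxy : x < y)
    (hx : Emits b x) (hy : Emits b y) :
    ∃ P Q, IsPath b P x ∧ IsPath b Q y ∧ (IsFork P Q ∨ IsFork Q P) := by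
  induction y using WellFoundedLT.induction generalizing x with
  | ind y ih =>
  obtain ⟨w, hwy, hbw, hw⟩ := hy.exists_negEdge_ne_zero hb (hnet y (Fin.ne_zero_of_lt hxy))
  obtain hlt | rfl | hlt := lt_trichotomy w x
  · obtain ⟨Q, P, hQ, hP, hfork⟩ := ih x hxy hlt hw hx
    have hPy := hP.lt_of_mem hxy
    exact ⟨P, insert y Q, hP, hQ.insert hwy hbw,
      hfork.symm.imp (·.insert_right hPy) (·.insert_left (hQ.lt_of_mem hwy) hPy)⟩
  · obtain ⟨P, hP⟩ := hw.exists_isPath hb hnet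
    exact ⟨P, insert y P, hP, hP.insert hwy hbw,
      .inr (isFork_insert_self hP.zero_mem (hP.lt_of_mem hwy))⟩
  · obtain ⟨P, Q, hP, hQ, hfork⟩ := ih w hwy hlt hx hw
    have hPy := hP.lt_of_mem hxy
    exact ⟨P, insert y Q, hP, hQ.insert hwy hbw,
      hfork.imp (·.insert_right hPy) (·.insert_left (hQ.lt_of_mem hwy) hPy)⟩

theorem IsPath.support_forkFlow_subset (hP : IsPath b P x) (hQ : IsPath b Q y) (hxy : x < y)
    (hb : b (posEdge hxy) ≠ 0) : Function.support (forkFlow P Q) ⊆ Function.support b := by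
  rintro ⟨⟨⟨i, j⟩, hij⟩, _ | _⟩ he
  · obtain h | h := (forkFlow_negEdge_ne_zero_iff hij).1 he
    · exact hP.ne_zero hij h
    · exact hQ.ne_zero hij h
  · rw [Function.mem_support, forkFlow_posEdge P Q hij,
      closingFlow_eq_single hP.max_eq hQ.max_eq hxy, Pi.single_apply, ne_eq,
      ite_eq_right_iff, Classical.not_imp] at he
    change b (posEdge hij) ≠ 0
    rwa [he.1]

theorem exists_isFork_support_subset (hb₀ : 0 ≤ b) (hb : netflow n b = Pi.single 0 2) :
    ∃ P Q, IsFork P Q ∧ Function.support (forkFlow P Q) ⊆ Function.support b := by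
  have hnet : ∀ k ≠ 0, netflow n b k ≤ 0 := fun k hk ↦ by rw [hb, Pi.single_eq_of_ne hk]
  obtain ⟨x, y, hxy, hbxy⟩ := exists_posEdge_ne_zero hb
  obtain ⟨P, Q, hP, hQ, hfork | hfork⟩ := exists_isPath_isFork hb₀ hnet hxy
    ⟨_, hbxy, rootD_tail_pos _⟩ ⟨_, hbxy, rootD_posEdge_head_pos hxy⟩
  · exact ⟨P, Q, hfork, hP.support_forkFlow_subset hQ hxy hbxy⟩
  · refine ⟨Q, P, hfork, ?_⟩
    rw [forkFlow_comm]
    exact hP.support_forkFlow_subset hQ hxy hbxy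

/-- The set of forks in `K^D_{n+1}`. -/
def forks (n : ℕ) : Set (Finset (Fin (n + 1)) × Finset (Fin (n + 1))) :=
  {F | IsFork F.1 F.2}

theorem extremePoints_eq_image_forks (n : ℕ) :
    (CRYD n).extremePoints ℝ = (fun F ↦ forkFlow F.1 F.2) '' forks n := by
  ext b
  rw [eq_setOf_netflow, mem_extremePoints_nonneg_fiber_iff]
  constructor
  · rintro ⟨⟨hb₀, hb⟩, hmin⟩
    obtain ⟨P, Q, hfork, hsupp⟩ := exists_isFork_support_subset hb₀ hb
    exact ⟨(P, Q), hfork, hmin _ (forkFlow_nonneg P Q) hfork.netflow_forkFlow hsupp⟩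
  · rintro ⟨⟨P, Q⟩, hfork : IsFork P Q, rfl⟩
    exact ⟨⟨forkFlow_nonneg P Q, hfork.netflow_forkFlow⟩, fun y _ ↦ hfork.eq_forkFlow⟩

theorem IsFork.mem_left_of_forkFlow_eq (h : IsFork P Q) (h' : IsFork P' Q')
    (heq : forkFlow P Q = forkFlow P' Q') {k : Fin (n + 1)} (hlt : ∀ l < k, l ∈ P ↔ l ∈ P')
    (hk : k ∈ P) : k ∈ P' := by
  by_contra hkP'
  have hk₀ : 0 < k := Fin.pos_of_ne_zero fun hk₀ ↦ hkP' (hk₀ ▸ h'.zero_mem_left)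
  obtain ⟨i, hi⟩ := exists_isPred h.zero_mem_left hk hk₀
  have hik : i < k := hi.2.1.2
  have hflow : forkFlow P' Q' (negEdge hik) ≠ 0 :=
    heq ▸ (forkFlow_negEdge_ne_zero_iff hik).2 (.inl hi)
  obtain hiP' | hiQ' := (forkFlow_negEdge_ne_zero_iff hik).1 hflow
  · exact hkP' hiP'.1
  · obtain ⟨p, hp, hagree, hdisj⟩ := h'.exists_parting
    have hpk : p < k := by
      refine (le_of_not_gt fun hkp ↦ hkP' ((hagree k hkp).2 hiQ'.1)).lt_of_ne ?_
      rintro rfl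
      exact hkP' hp
    have hpi : p ≤ i := hi.2.2 ⟨(hlt p hpk).2 hp, hpk⟩
    exact hdisj i hpi ((hlt i hik).1 hi.2.1.1) hiQ'.2.1.1

theorem pathFlow_injOn : Set.InjOn (pathFlow (n := n)) {P | 0 ∈ P} := by
  have hsub : ∀ ⦃P Q : Finset (Fin (n + 1))⦄, 0 ∈ P → 0 ∈ Q → pathFlow P = pathFlow Q → P ⊆ Q := by
    intro P Q hP hQ heq k hk
    obtain rfl | hk₀ := eq_or_ne k 0
    · exact hQ
    · obtain ⟨i, hi⟩ := exists_isPred hP hk (Fin.pos_of_ne_zero hk₀)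
      have hflow := (pathFlow_negEdge_ne_zero_iff hi.2.1.2).2 hi
      exact ((pathFlow_negEdge_ne_zero_iff hi.2.1.2).1 (heq ▸ hflow)).1
  exact fun P hP Q hQ heq ↦ (hsub hP hQ heq).antisymm (hsub hQ hP heq.symm)

theorem forkFlow_injOn : Set.InjOn (fun F ↦ forkFlow F.1 F.2) (forks n) := by
  rintro ⟨P, Q⟩ (h : IsFork P Q) ⟨P', Q'⟩ (h' : IsFork P' Q') (heq : forkFlow P Q = forkFlow P' Q')
  have hmem : ∀ k, k ∈ P ↔ k ∈ P' := by
    intro k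
    induction k using WellFoundedLT.induction with
    | ind k ih =>
    exact ⟨h.mem_left_of_forkFlow_eq h' heq ih,
      h'.mem_left_of_forkFlow_eq h heq.symm fun l hl ↦ (ih l hl).symm⟩
  obtain rfl : P = P' := Finset.ext hmem
  have hpath : pathFlow Q = pathFlow Q' := by
    ext ⟨⟨⟨i, j⟩, hij⟩, _ | _⟩
    · have hneg := congrFun heq (negEdge hij)
      rw [forkFlow_negEdge, forkFlow_negEdge] at hneg
      exact add_left_cancel hneg
    · exact (pathFlow_posEdge Q hij).trans (pathFlow_posEdge Q' hij).symm
  rw [pathFlow_injOn h.zero_mem_right h'.zero_mem_right hpath]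

/-- The words encoding forks, with a letter for every node: `0` for the nodes on neither path, `1`
for those on the second path and `2` for those on the first path only. -/
def forkWords (n : ℕ) : Set (Fin (n + 1) → Fin 3) :=
  {v | v 0 = 1 ∧ ∃ k, v k = 2}

/-- The word of the pair of paths `F`. -/
def toWord (F : Finset (Fin (n + 1)) × Finset (Fin (n + 1))) (k : Fin (n + 1)) : Fin 3 :=
  if k ∈ F.2 then 1 else if k ∈ F.1 then 2 else 0

theorem toWord_eq_one_iff {k : Fin (n + 1)} : toWord (P, Q) k = 1 ↔ k ∈ Q := by
  unfold toWord
  split_ifs <;> simp_all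

theorem toWord_eq_two_iff {k : Fin (n + 1)} : toWord (P, Q) k = 2 ↔ k ∈ P ∧ k ∉ Q := by
  unfold toWord
  split_ifs <;> simp_all

/-- The pair of paths encoded by the word `v`. -/
def ofWord (v : Fin (n + 1) → Fin 3) : Finset (Fin (n + 1)) × Finset (Fin (n + 1)) :=
  (Finset.univ.filter fun k ↦ v k = 2 ∨ v k = 1 ∧ ∀ l ≤ k, v l ≠ 2,
    Finset.univ.filter fun k ↦ v k = 1)

theorem toWord_ofWord (v : Fin (n + 1) → Fin 3) : toWord (ofWord v) = v := by
  ext k : 1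
  have hcases : ∀ a : Fin 3, a = 0 ∨ a = 1 ∨ a = 2 := by decide
  obtain h | h | h := hcases (v k) <;> simp [toWord, ofWord, h]

theorem IsFork.ofWord_toWord (h : IsFork P Q) : ofWord (toWord (P, Q)) = (P, Q) := by
  obtain ⟨p, hp, hagree, hdisj⟩ := h.exists_parting
  ext k
  · simp only [ofWord, Finset.mem_filter, Finset.mem_univ, true_and, toWord_eq_one_iff, ne_eq,
      toWord_eq_two_iff, not_and, not_not]
    constructor
    · rintro (⟨hkP, -⟩ | ⟨hkQ, hle⟩)
      · exact hkP
      · have hkp : k < p := lt_of_not_ge fun hpk ↦ hdisj p le_rfl hp (hle p hpk hp)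
        exact (hagree k hkp).2 hkQ
    · intro hkP
      by_cases hkQ : k ∈ Q
      · have hkp : k < p := lt_of_not_ge fun hpk ↦ hdisj k hpk hkP hkQ
        exact .inr ⟨hkQ, fun l hl ↦ (hagree l (hl.trans_lt hkp)).1⟩
      · exact .inl ⟨hkP, hkQ⟩
  · simp [ofWord, toWord_eq_one_iff]

theorem IsFork.toWord_mem (h : IsFork P Q) : toWord (P, Q) ∈ forkWords n := by
  obtain ⟨p, hp, -, hdisj⟩ := h.exists_parting
  exact ⟨toWord_eq_one_iff.2 h.zero_mem_right, p, toWord_eq_two_iff.2 ⟨hp, hdisj p le_rfl hp⟩⟩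

theorem ofWord_mem_forks {v : Fin (n + 1) → Fin 3} (hv : v ∈ forkWords n) : ofWord v ∈ forks n := by
  obtain ⟨hv₀, htwo⟩ := hv
  obtain ⟨p, hp : v p = 2, hmin⟩ := wellFounded_lt.has_min {k | v k = 2} htwo
  have hlt : ∀ k < p, v k ≠ 2 := fun k hk hvk ↦ hmin k hvk hk
  refine ⟨?_, by simp [ofWord, hv₀], p, by simp [ofWord, hp], fun k hk ↦ ?_, fun k hpk ↦ ?_⟩
  · simp [ofWord, hv₀]
  · have hle : ∀ l ≤ k, v l ≠ 2 := fun l hl ↦ hlt l (hl.trans_lt hk)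
    simp only [ofWord, Finset.mem_filter, Finset.mem_univ, true_and, hlt k hk, false_or]
    exact and_iff_left hle
  · have hnot : ¬∀ l ≤ k, v l ≠ 2 := fun h ↦ h p hpk hp
    simp +contextual [ofWord, hnot]

theorem bijOn_toWord (n : ℕ) : Set.BijOn toWord (forks n) (forkWords n) :=
  Set.InvOn.bijOn (f' := ofWord)
    ⟨fun _ hF ↦ IsFork.ofWord_toWord hF, fun v _ ↦ toWord_ofWord v⟩
    (fun _ hF ↦ IsFork.toWord_mem hF) fun _ ↦ ofWord_mem_forks

theorem ncard_forkWords (n : ℕ) : (forkWords n).ncard = 3 ^ n - 2 ^ n := by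
  let box (s : Finset (Fin 3)) : Finset (Fin (n + 1) → Fin 3) :=
    Fintype.piFinset (Fin.cons {1} fun _ ↦ s)
  have mem_box : ∀ s v, v ∈ box s ↔ v 0 = 1 ∧ ∀ k : Fin n, v k.succ ∈ s := by
    simp [box, Fintype.mem_piFinset, Fin.forall_fin_succ]
  have card_box : ∀ s, (box s).card = s.card ^ n := by
    simp [box, Fintype.card_piFinset, Fin.prod_univ_succ]
  have hsub : box {0, 1} ⊆ box Finset.univ :=
    fun v hv ↦ (mem_box _ v).2 ⟨((mem_box _ v).1 hv).1, fun _ ↦ Finset.mem_univ _⟩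
  have hwords : forkWords n = ↑(box Finset.univ \ box {0, 1}) := by
    have hletter : ∀ a : Fin 3, a ∈ ({0, 1} : Finset (Fin 3)) ↔ a ≠ 2 := by decide
    ext v
    simp only [Finset.coe_sdiff, Set.mem_sdiff, Finset.mem_coe, mem_box, hletter, forkWords,
      Set.mem_ofPred_eq, Finset.mem_univ, Fin.exists_fin_succ]
    grind
  rw [hwords, Set.ncard_coe_finset, Finset.card_sdiff_of_subset hsub, card_box, card_box,
    Finset.card_univ, Fintype.card_fin, Finset.card_pair zero_ne_one]

end CRYD

/-- `CRYD_{n+1}` has exactly `3^n - 2^n` vertices. -/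
theorem stmt6 (n : ℕ) (hn : 1 ≤ n) :
    ((CRYD n).extremePoints ℝ).ncard = 3 ^ n - 2 ^ n := by
  rw [CRYD.extremePoints_eq_image_forks, CRYD.forkFlow_injOn.ncard_image,
    (CRYD.bijOn_toWord n).ncard_eq, CRYD.ncard_forkWords]
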